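/- (Semi-discrete entropy equality for entropy conservative schemes, Tadmor's theorem.) Let m ∈ ℕ, Δx > 0, η : ℝ^m → ℝ differentiable, and let u_{i−1}, u_i, u_{i+1} : ℝ → ℝ^m with u_i differentiable; set v_j(t) = ∇η(u_j(t)) for j ∈ {i−1, i, i+1}. Suppose for every t there are ψ_{i−1}(t), ψ_i(t), ψ_{i+1}(t) ∈ ℝ and fluxes F*₊(t), F*₋(t) ∈ ℝ^m satisfying ⟨v_{i+1}(t) − v_i(t), F*₊(t)⟩ = ψ_{i+1}(t) − ψ_i(t) and ⟨v_i(t) − v_{i−1}(t), F*₋(t)⟩ = ψ_i(t) − ψ_{i−1}(t), and define q*₊ = ⟨(v_i + v_{i+1})/2, F*₊⟩ − (ψ_i + ψ_{i+1})/2, q*₋ = ⟨(v_{i−1} + v_i)/2, F*₋⟩ − (ψ_{i−1} + ψ_i)/2. If u_i′(t) = −(F*₊(t) − F*₋(t))/Δx for all t, then d/dt [η(u_i(t))] + (q*₊(t) − q*₋(t))/Δx = 0 for all t. -/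

import Mathlib

/-! Tadmor's condition turns the symmetric numerical entropy flux into one-sided expressions:
`q = ⟨v_L, F⟩ - ψ_L = ⟨v_R, F⟩ - ψ_R`. Evaluating both interface fluxes at the entropy variable
`v = ∇η(u)` and potential `ψ` of the common cell, `ψ` cancels and `q₊ - q₋ = ⟨v, F₊ - F₋⟩`. By the
chain rule and the scheme this is `-Δx` times the time derivative of `η(u)`. -/

open Module (Dual)

section Flux

variable {R M : Type*} [CommRing R] [AddCommGroup M] [Module R M]

/-- Tadmor's condition: `F` is an entropy conservative flux for the data `(vL, ψL)`, `(vR, ψR)`.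
Entropy variables are encoded as linear forms on the space of fluxes, so that `⟨v, F⟩` is `v F`. -/
def IsEntropyConservativeFlux (vL vR : Dual R M) (ψL ψR : R) (F : M) : Prop :=
  (vR - vL) F = ψR - ψL

/-- The numerical entropy flux `⟨(vL + vR) / 2, F⟩ - (ψL + ψR) / 2` associated with `F`. The
averages are midpoints, which allows scalars in any commutative ring where `2` is invertible. -/
def numericalEntropyFlux [Invertible (2 : R)] (vL vR : Dual R M) (ψL ψR : R) (F : M) : R :=
  midpoint R vL vR F - midpoint R ψL ψR

theorem numericalEntropyFlux_swap [Invertible (2 : R)] (vL vR : Dual R M) (ψL ψR : R) (F : M) :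
    numericalEntropyFlux vR vL ψR ψL F = numericalEntropyFlux vL vR ψL ψR F := by
  simp only [numericalEntropyFlux, midpoint_comm]

namespace IsEntropyConservativeFlux

variable {vL vR : Dual R M} {ψL ψR : R} {F : M}

theorem swap (h : IsEntropyConservativeFlux vL vR ψL ψR F) :
    IsEntropyConservativeFlux vR vL ψR ψL F := by
  rw [IsEntropyConservativeFlux, ← neg_sub vR, LinearMap.neg_apply, h, neg_sub]

theorem numericalEntropyFlux_eq_left [Invertible (2 : R)]
    (h : IsEntropyConservativeFlux vL vR ψL ψR F) :
    numericalEntropyFlux vL vR ψL ψR F = vL F - ψL := by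
  rw [← sub_eq_zero]
  calc numericalEntropyFlux vL vR ψL ψR F - (vL F - ψL)
      = (midpoint R vL vR - vL) F - (midpoint R ψL ψR - ψL) := by
        rw [numericalEntropyFlux, LinearMap.sub_apply, sub_sub_sub_comm]
    _ = ⅟(2 : R) • ((vR - vL) F - (ψR - ψL)) := by
        rw [midpoint_sub_left, midpoint_sub_left, LinearMap.smul_apply, ← smul_sub]
    _ = 0 := by rw [h, sub_self, smul_zero]

theorem numericalEntropyFlux_eq_right [Invertible (2 : R)]
    (h : IsEntropyConservativeFlux vL vR ψL ψR F) :
    numericalEntropyFlux vL vR ψL ψR F = vR F - ψR := by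
  rw [← numericalEntropyFlux_swap, h.swap.numericalEntropyFlux_eq_left]

theorem numericalEntropyFlux_sub_numericalEntropyFlux [Invertible (2 : R)]
    {v : Dual R M} {ψ : R} {FL FR : M} (hL : IsEntropyConservativeFlux vL v ψL ψ FL)
    (hR : IsEntropyConservativeFlux v vR ψ ψR FR) :
    numericalEntropyFlux v vR ψ ψR FR - numericalEntropyFlux vL v ψL ψ FL = v (FR - FL) := by
  rw [hR.numericalEntropyFlux_eq_left, hL.numericalEntropyFlux_eq_right, sub_sub_sub_cancel_right,
    map_sub]

end IsEntropyConservativeFlux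

end Flux

section Coordinates

variable {ι : Type*} [Fintype ι] [DecidableEq ι]

theorem isEntropyConservativeFlux_dotProductEquiv_iff {R : Type*} [CommRing R]
    {vL vR : ι → R} {ψL ψR : R} {F : ι → R} :
    IsEntropyConservativeFlux (dotProductEquiv R ι vL) (dotProductEquiv R ι vR) ψL ψR F ↔
      ∑ l, (vR l - vL l) * F l = ψR - ψL := by
  rw [IsEntropyConservativeFlux, ← map_sub]
  rfl

theorem numericalEntropyFlux_dotProductEquiv {K : Type*} [Field K] [Invertible (2 : K)]
    (vL vR : ι → K) (ψL ψR : K) (F : ι → K) :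
    numericalEntropyFlux (dotProductEquiv K ι vL) (dotProductEquiv K ι vR) ψL ψR F =
      ∑ l, (vL l + vR l) / 2 * F l - (ψL + ψR) / 2 := by
  simp only [numericalEntropyFlux, midpoint_eq_smul_add, ← map_add, ← map_smul,
    dotProductEquiv_apply_apply, dotProduct, Pi.smul_apply, Pi.add_apply, smul_eq_mul,
    invOf_eq_inv, div_eq_inv_mul]

theorem eq_dotProductEquiv_iff {R : Type*} [CommSemiring R] {φ : Dual R (ι → R)} {w : ι → R} :
    φ = dotProductEquiv R ι w ↔ ∀ l, w l = φ (Pi.single l 1) := by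
  rw [← LinearEquiv.symm_apply_eq, eq_comm, funext_iff]
  rfl

end Coordinates

-- In the scheme, `c` is `1 / Δx`.
theorem semidiscrete_entropy_equality_general {𝕜 E : Type*} [NontriviallyNormedField 𝕜]
    [Invertible (2 : 𝕜)] [NormedAddCommGroup E] [NormedSpace 𝕜 E] {c t : 𝕜} {η : E → 𝕜}
    {u : 𝕜 → E} {v : StrongDual 𝕜 E} {vL vR : Dual 𝕜 E} {ψL ψ ψR : 𝕜} {FL FR : E}
    (hη : HasFDerivAt η v (u t)) (hL : IsEntropyConservativeFlux vL v ψL ψ FL)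
    (hR : IsEntropyConservativeFlux v vR ψ ψR FR) (hu : HasDerivAt u (-c • (FR - FL)) t) :
    HasDerivAt (fun s => η (u s))
      (-c * (numericalEntropyFlux v vR ψ ψR FR - numericalEntropyFlux vL v ψL ψ FL)) t := by
  rw [hL.numericalEntropyFlux_sub_numericalEntropyFlux hR, ← smul_eq_mul, ← map_smul]
  exact hη.comp_hasDerivAt t hu

/-- Semi-discrete entropy equality for entropy conservative schemes,
Tadmor's theorem: if `u_i' = -(F*₊ - F*₋)/Δx` with entropy conservative fluxes
`F*_±`, then `d/dt η(u_i) + (q*₊ - q*₋)/Δx = 0`.  Here `v = ∇η` componentwise. -/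
theorem semidiscrete_entropy_equality (m : ℕ) (Δx : ℝ) (hΔx : 0 < Δx)
    (η : (Fin m → ℝ) → ℝ) (hη : Differentiable ℝ η)
    (um ui up : ℝ → (Fin m → ℝ)) (hui : Differentiable ℝ ui)
    (v : (Fin m → ℝ) → (Fin m → ℝ))
    (hv : ∀ x l, v x l = fderiv ℝ η x (Pi.single l 1))
    (ψm ψi ψp : ℝ → ℝ) (Fsp Fsm : ℝ → (Fin m → ℝ))
    (hFp : ∀ t, ∑ l, (v (up t) l - v (ui t) l) * Fsp t l = ψp t - ψi t)
    (hFm : ∀ t, ∑ l, (v (ui t) l - v (um t) l) * Fsm t l = ψi t - ψm t)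
    (qsp qsm : ℝ → ℝ)
    (hqsp : ∀ t, qsp t = (∑ l, ((v (ui t) l + v (up t) l) / 2) * Fsp t l) - (ψi t + ψp t) / 2)
    (hqsm : ∀ t, qsm t = (∑ l, ((v (um t) l + v (ui t) l) / 2) * Fsm t l) - (ψm t + ψi t) / 2)
    (hscheme : ∀ t, deriv ui t = -(Δx)⁻¹ • (Fsp t - Fsm t)) :
    ∀ t, deriv (fun s => η (ui s)) t + (qsp t - qsm t) / Δx = 0 := by
  intro t
  have fderiv_eq (x : Fin m → ℝ) :
      (fderiv ℝ η x : Dual ℝ (Fin m → ℝ)) = dotProductEquiv ℝ (Fin m) (v x) :=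
    eq_dotProductEquiv_iff.2 (hv x)
  have hasDerivAt_entropy := semidiscrete_entropy_equality_general (hη (ui t)).hasFDerivAt
    (fderiv_eq (ui t) ▸ isEntropyConservativeFlux_dotProductEquiv_iff.2 (hFm t))
    (fderiv_eq (ui t) ▸ isEntropyConservativeFlux_dotProductEquiv_iff.2 (hFp t))
    (hscheme t ▸ (hui t).hasDerivAt)
  rw [hasDerivAt_entropy.deriv, fderiv_eq, numericalEntropyFlux_dotProductEquiv,
    numericalEntropyFlux_dotProductEquiv, ← hqsp, ← hqsm]
  ring
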